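/- arXiv:2308.06364 — 2 statements merged into one kernel-verified Lean document; each statement's English description precedes it below -/
import Mathlib

section
/- Let N be a positive integer with base-φ representation given by the finite set S of integers (so S contains no two consecutive integers and N = Σ_{i∈S} φ^i). Assume S contains at least one positive element, and let i be the smallest positive element of S. If i is even, then N = Σ_{k∈S, k>0} L_k + d_0. -/
/-!
Split `N = A + d₀ + B`, where `A` and `B` collect the powers `φ^k` with `k > 0` and `k < 0`, and let
`A'` be the sum of the conjugates `φ̄^k` over the positive `k ∈ S`. The claim is `B = A'`. Since
`A + A'` is a sum of Lucas numbers, `B - A'` is an integer, so it suffices that `|B - A'| < 1`.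

Both estimates come from `sum_zpow_lt`: a sum of powers of `φ` with pairwise non-consecutive
exponents `≤ m` is less than `φ^(m+1)`. It gives `0 ≤ B < 1` directly. Since `|φ̄^k| = φ^(-k)`, it
also shows that the terms of `A'` after the leading one have total size less than `φ^(-i-1)`; the
leading term is `φ̄^i = φ^(-i)`, positive because `i` is even, so
`0 < A' < φ^(-i) + φ^(-i-1) = φ^(1-i) < 1`.
-/

/-- The golden ratio φ = (1+√5)/2. -/
noncomputable def goldenPhi : ℝ := (1 + Real.sqrt 5) / 2

/-- The algebraic conjugate φ̄ = (1−√5)/2. -/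
noncomputable def goldenPhiBar : ℝ := (1 - Real.sqrt 5) / 2

/-- Lucas numbers extended to all integer indices: L n = φ^n + φ̄^n. -/
noncomputable def LucasR (n : ℤ) : ℝ := goldenPhi ^ n + goldenPhiBar ^ n

lemma goldenPhi_gt_one : 1 < goldenPhi := Real.one_lt_goldenRatio

lemma goldenPhi_pos : 0 < goldenPhi := one_pos.trans goldenPhi_gt_one

lemma goldenPhi_sq : goldenPhi ^ 2 = goldenPhi + 1 := Real.goldenRatio_sq

lemma goldenPhiBar_sq : goldenPhiBar ^ 2 = goldenPhiBar + 1 := Real.goldenConj_sq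

lemma goldenPhiBar_eq : goldenPhiBar = -goldenPhi⁻¹ := by
  have h : goldenPhi⁻¹ = -goldenPhiBar := Real.inv_goldenRatio
  rw [h, neg_neg]

lemma goldenPhi_zpow_add_one (m : ℤ) :
    goldenPhi ^ (m + 1) = goldenPhi ^ m + goldenPhi ^ (m - 1) := by
  have h0 : goldenPhi ≠ 0 := goldenPhi_pos.ne'
  have e1 : goldenPhi ^ (m + 1) = goldenPhi ^ (m - 1) * goldenPhi ^ 2 := by
    rw [← zpow_natCast, ← zpow_add₀ h0]
    congr 1
    push_cast
    ring
  have e2 : goldenPhi ^ m = goldenPhi ^ (m - 1) * goldenPhi := by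
    rw [← zpow_add_one₀ h0]
    congr 1
    ring
  rw [e1, e2, goldenPhi_sq]
  ring

lemma abs_goldenPhiBar_zpow (k : ℤ) : |goldenPhiBar ^ k| = goldenPhi ^ (-k) := by
  rw [abs_zpow, goldenPhiBar_eq, abs_neg, abs_of_pos (inv_pos.2 goldenPhi_pos), inv_zpow, zpow_neg]

/-- The greedy bound: removing the largest exponent `a` leaves exponents `≤ a - 2`, so the sum is
less than `φ^a + φ^(a-1) = φ^(a+1)`. -/
lemma sum_zpow_lt (T : Finset ℤ) : (∀ k ∈ T, k + 1 ∉ T) → ∀ m : ℤ, (∀ k ∈ T, k ≤ m) →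
    ∑ k ∈ T, goldenPhi ^ k < goldenPhi ^ (m + 1) := by
  induction T using Finset.induction_on_max with
  | empty =>
    intro _ m _
    simpa using zpow_pos goldenPhi_pos (m + 1)
  | insert a s has ih =>
    intro hnc m hm
    have ha : a ∉ s := fun h => lt_irrefl _ (has a h)
    rw [Finset.sum_insert ha]
    have h1 := ih
      (fun k hk hk' => hnc k (Finset.mem_insert_of_mem hk) (Finset.mem_insert_of_mem hk'))
      (a - 2) (fun k hk => by
        have h2 := has k hk
        have h3 : k + 1 ≠ a := fun h =>
          hnc k (Finset.mem_insert_of_mem hk) (h ▸ Finset.mem_insert_self _ _)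
        omega)
    rw [show a - 2 + 1 = a - 1 by ring] at h1
    have h4 : goldenPhi ^ (a + 1) ≤ goldenPhi ^ (m + 1) :=
      zpow_le_zpow_right₀ goldenPhi_gt_one.le
        (by have := hm a (Finset.mem_insert_self _ _); omega)
    linarith [goldenPhi_zpow_add_one a]

/-- The mirror image of `sum_zpow_lt` for the conjugate: exponents `≥ m` instead of `≤ m`. -/
lemma abs_sum_bar_lt (T : Finset ℤ) (hnc : ∀ k ∈ T, k + 1 ∉ T) (m : ℤ) (hm : ∀ k ∈ T, m ≤ k) :
    |∑ k ∈ T, goldenPhiBar ^ k| < goldenPhi ^ (1 - m) := by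
  have h := sum_zpow_lt (T.image (fun k => -k))
    (by
      intro k hk hk'
      simp only [Finset.mem_image] at hk hk'
      obtain ⟨a, ha, rfl⟩ := hk
      obtain ⟨b, hb, hab⟩ := hk'
      exact hnc b hb (by rwa [show b + 1 = a by omega]))
    (-m)
    (by
      intro k hk
      obtain ⟨a, ha, rfl⟩ := Finset.mem_image.1 hk
      exact neg_le_neg (hm a ha))
  rw [Finset.sum_image (fun a _ b _ hab => neg_injective hab), neg_add_eq_sub] at h
  refine (Finset.abs_sum_le_sum_abs _ _).trans_lt ?_
  simpa only [abs_goldenPhiBar_zpow] using h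

/-- Two consecutive values are proved integral at once, to match the Lucas recurrence. -/
lemma lucas_int_pair (n : ℕ) : (∃ z : ℤ, LucasR n = z) ∧ ∃ z : ℤ, LucasR (n + 1 : ℕ) = z := by
  simp only [LucasR, zpow_natCast]
  induction n with
  | zero =>
    refine ⟨⟨2, by norm_num⟩, ⟨1, ?_⟩⟩
    simp only [goldenPhi, goldenPhiBar]
    push_cast
    ring
  | succ n ih =>
    obtain ⟨⟨a, ha⟩, b, hb⟩ := ih
    refine ⟨⟨b, hb⟩, a + b, ?_⟩
    push_cast
    rw [← ha, ← hb]
    linear_combination goldenPhi ^ n * goldenPhi_sq + goldenPhiBar ^ n * goldenPhiBar_sq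

lemma lucas_int (k : ℤ) (hk : 0 < k) : ∃ z : ℤ, LucasR k = z := by
  lift k to ℕ using hk.le
  exact (lucas_int_pair k).1

/-- Theorem 1 (even case): if the smallest positive index `i` in the base-φ
representation `S` of `N` is even, then `N = Σ_{k∈S, k>0} L_k + d_0`. -/
theorem stmt_1 (N : ℕ) (hN : 0 < N) (S : Finset ℤ)
    (hnc : ∀ k ∈ S, k + 1 ∉ S)
    (hrep : (N : ℝ) = ∑ k ∈ S, goldenPhi ^ k)
    (i : ℤ) (hiS : i ∈ S) (hipos : 0 < i)
    (hmin : ∀ j ∈ S, 0 < j → i ≤ j)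
    (heven : Even i) :
    (N : ℝ) = (∑ k ∈ S.filter (fun k => 0 < k), LucasR k) +
      (if (0 : ℤ) ∈ S then 1 else 0) := by
  set P := S.filter (fun k => 0 < k) with hP
  set Q := S.filter (fun k => k < 0) with hQ
  set d : ℤ := if (0 : ℤ) ∈ S then 1 else 0 with hd
  have hdR : (if (0 : ℤ) ∈ S then (1 : ℝ) else 0) = d := by rw [hd]; split_ifs <;> simp
  rw [hdR]
  have hsplit : (N : ℝ) = ∑ k ∈ P, goldenPhi ^ k + d + ∑ k ∈ Q, goldenPhi ^ k := by
    have hterm : ∀ k ∈ S, goldenPhi ^ k = (if 0 < k then goldenPhi ^ k else 0)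
        + (if 0 = k then (1 : ℝ) else 0) + (if k < 0 then goldenPhi ^ k else 0) := by
      intro k _
      rcases lt_trichotomy k 0 with h | h | h
      · simp [h, h.not_gt, h.ne']
      · simp [h]
      · simp [h, h.not_gt, h.ne]
    rw [hrep, Finset.sum_congr rfl hterm, Finset.sum_add_distrib, Finset.sum_add_distrib,
      Finset.sum_ite_eq, hdR, ← Finset.sum_filter, ← Finset.sum_filter]
  have hL : ∑ k ∈ P, LucasR k = ∑ k ∈ P, goldenPhi ^ k + ∑ k ∈ P, goldenPhiBar ^ k := by
    simp only [LucasR, Finset.sum_add_distrib]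
  obtain ⟨M, hM⟩ : ∃ z : ℤ, ∑ k ∈ P, LucasR k = z := by
    choose! f hf using lucas_int
    refine ⟨∑ k ∈ P, f k, ?_⟩
    push_cast
    exact Finset.sum_congr rfl fun k hk => hf k (Finset.mem_filter.1 hk).2
  have hB0 : 0 ≤ ∑ k ∈ Q, goldenPhi ^ k :=
    Finset.sum_nonneg fun k _ => (zpow_pos goldenPhi_pos k).le
  have hB1 : ∑ k ∈ Q, goldenPhi ^ k < 1 := by
    have := sum_zpow_lt Q
      (fun k hk hk' => hnc k (Finset.mem_filter.1 hk).1 (Finset.mem_filter.1 hk').1) (-1)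
      (fun k hk => by have := (Finset.mem_filter.1 hk).2; omega)
    simpa using this
  have hiP : i ∈ P := Finset.mem_filter.2 ⟨hiS, hipos⟩
  have hrest := abs_sum_bar_lt (P.erase i)
    (fun k hk hk' => hnc k (Finset.mem_filter.1 (Finset.mem_of_mem_erase hk)).1
      (Finset.mem_filter.1 (Finset.mem_of_mem_erase hk')).1) (i + 2)
    (fun k hk => by
      have h1 := Finset.ne_of_mem_erase hk
      have h2 := Finset.mem_filter.1 (Finset.mem_of_mem_erase hk)
      have h3 := hmin k h2.1 h2.2
      have h4 : k ≠ i + 1 := fun h => hnc i hiS (h ▸ h2.1)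
      omega)
  have hlead : goldenPhiBar ^ i = goldenPhi ^ (-i) := by
    rw [← abs_goldenPhiBar_zpow, abs_of_nonneg (heven.zpow_nonneg _)]
  have hA := Finset.add_sum_erase P (fun k : ℤ => goldenPhiBar ^ k) hiP
  simp only [hlead] at hA
  have hrec := goldenPhi_zpow_add_one (-i)
  rw [show 1 - (i + 2) = -i - 1 by ring, abs_lt] at hrest
  have hle : goldenPhi ^ (-i - 1) ≤ goldenPhi ^ (-i) :=
    zpow_le_zpow_right₀ goldenPhi_gt_one.le (by omega)
  have hle1 : goldenPhi ^ (-i + 1) ≤ 1 :=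
    zpow_le_one_of_nonpos₀ goldenPhi_gt_one.le (by omega)
  have hz : ((N - d - M : ℤ) : ℝ) = ∑ k ∈ Q, goldenPhi ^ k - ∑ k ∈ P, goldenPhiBar ^ k := by
    push_cast
    linarith
  have hlt : (N - d - M : ℤ) < 1 := by
    have : ((N - d - M : ℤ) : ℝ) < 1 := by rw [hz]; linarith
    exact_mod_cast this
  have hgt : -1 < (N - d - M : ℤ) := by
    have : (-1 : ℝ) < ((N - d - M : ℤ) : ℝ) := by rw [hz]; linarith
    exact_mod_cast this
  have hfin : (N : ℤ) = M + d := by omega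
  rw [hM]
  exact_mod_cast hfin
end

section
/- Let N be a positive integer and let i_1, i_2, …, i_m be integers. If N = φ^{i_1} + φ^{i_2} + ⋯ + φ^{i_m}, then for every integer n, N·L_n = L_{n+i_1} + L_{n+i_2} + ⋯ + L_{n+i_m}. -/
open Real in
theorem goldenPhi_eq : goldenPhi = goldenRatio := rfl

open Real in
theorem goldenPhiBar_eq_s5 : goldenPhiBar = goldenConj := rfl

/-- Conjugate powers of `φ` and `φ̄` have the same integer coordinates. -/
theorem exists_int_coords_zpow (j : ℤ) : ∃ a b : ℤ,
    goldenPhi ^ j = a + b * goldenPhi ∧ goldenPhiBar ^ j = a + b * goldenPhiBar := by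
  rw [goldenPhi_eq, goldenPhiBar_eq_s5]
  have h1 := Real.goldenRatio_sq
  have h2 := Real.goldenConj_sq
  induction j using Int.induction_on with
  | zero => exact ⟨1, 0, by simp, by simp⟩
  | succ j ih =>
    obtain ⟨a, b, ha, hb⟩ := ih
    refine ⟨b, a + b, ?_, ?_⟩
    · rw [zpow_add_one₀ Real.goldenRatio_ne_zero, ha]
      push_cast
      linear_combination (b : ℝ) * h1
    · rw [zpow_add_one₀ Real.goldenConj_ne_zero, hb]
      push_cast
      linear_combination (b : ℝ) * h2
  | pred j ih =>
    obtain ⟨a, b, ha, hb⟩ := ih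
    refine ⟨b - a, a, ?_, ?_⟩
    · rw [zpow_sub_one₀ Real.goldenRatio_ne_zero, ha, Real.inv_goldenRatio,
        ← Real.one_sub_goldenConj]
      push_cast
      linear_combination (b : ℝ) * h1
    · rw [zpow_sub_one₀ Real.goldenConj_ne_zero, hb, Real.inv_goldenConj,
        ← Real.one_sub_goldenRatio]
      push_cast
      linear_combination (b : ℝ) * h2

/-- The conjugate of the identity `N = ∑ φ^{i_k}`. -/
theorem sum_goldenPhiBar_zpow (N m : ℕ) (i : Fin m → ℤ)
    (h : (N : ℝ) = ∑ k, goldenPhi ^ (i k)) : (N : ℝ) = ∑ k, goldenPhiBar ^ (i k) := by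
  choose a b ha hb using exists_int_coords_zpow
  simp only [ha, Finset.sum_add_distrib, ← Finset.sum_mul] at h
  simp only [hb, Finset.sum_add_distrib, ← Finset.sum_mul]
  have hB : ∑ k, b (i k) = 0 := by
    by_contra hne
    refine (Real.goldenRatio_irrational.intCast_mul hne).ne_int (N - ∑ k, a (i k)) ?_
    rw [← goldenPhi_eq]
    push_cast
    linarith
  have hB' : ∑ k, (b (i k) : ℝ) = 0 := by exact_mod_cast hB
  rw [hB'] at h ⊢
  simpa using h

/-- If `N = φ^{i_1} + ⋯ + φ^{i_m}`, then `N·L_n = L_{n+i_1} + ⋯ + L_{n+i_m}`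
for every integer `n`. -/
theorem stmt_5 (N : ℕ) (hN : 0 < N) (m : ℕ) (i : Fin m → ℤ)
    (h : (N : ℝ) = ∑ k, goldenPhi ^ (i k)) :
    ∀ n : ℤ, (N : ℝ) * LucasR n = ∑ k, LucasR (n + i k) := by
  intro n
  have h' := sum_goldenPhiBar_zpow N m i h
  have hφ : goldenPhi ≠ 0 := Real.goldenRatio_ne_zero
  have hψ : goldenPhiBar ≠ 0 := Real.goldenConj_ne_zero
  simp only [LucasR, zpow_add₀ hφ, zpow_add₀ hψ, Finset.sum_add_distrib, ← Finset.mul_sum]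
  rw [← h, ← h']
  ring
end
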